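/- arXiv:2205.06331 — 5 statements merged into one kernel-verified Lean document; each statement's English description precedes it below -/
import Mathlib

section
/- For every λ₂ ∈ (0,1) and every natural number q ≥ 1, there exists a real polynomial p of degree at most q such that p(1) = 1 and sup_{x ∈ [−λ₂, λ₂]} |p(x)| ≤ 2·exp(−q·√(2·log(1/λ₂))). (One may take p(x) = T_q(x/λ₂)/T_q(1/λ₂), where T_q is the degree-q Chebyshev polynomial of the first kind.) -/
/-- scalar polynomial-approximation core of Lemma 1 of the paper.
For every `λ₂ ∈ (0,1)` and every `q ≥ 1` there exists a real polynomial `p` of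
degree at most `q` with `p 1 = 1` and
`sup_{x ∈ [-λ₂,λ₂]} |p x| ≤ 2 exp (-q √(2 log (1/λ₂)))`. -/
theorem stmt_2 (lam2 : ℝ) (hlam2_pos : 0 < lam2) (hlam2_lt : lam2 < 1)
    (q : ℕ) (hq : 1 ≤ q) :
    ∃ p : Polynomial ℝ, p.natDegree ≤ q ∧ p.eval 1 = 1 ∧
      ∀ x ∈ Set.Icc (-lam2) lam2,
        |p.eval x| ≤ 2 * Real.exp (-(q : ℝ) * Real.sqrt (2 * Real.log (1 / lam2))) := by
  have h1 : 1 ≤ lam2⁻¹ := (one_le_inv₀ hlam2_pos).2 hlam2_lt.le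
  obtain ⟨t, ht0, ht⟩ : ∃ t : ℝ, 0 ≤ t ∧ Real.cosh t = lam2⁻¹ :=
    ⟨Real.arcosh lam2⁻¹, Real.arcosh_nonneg h1, Real.cosh_arcosh h1⟩
  have hs : Real.sqrt (2 * Real.log (1 / lam2)) ≤ t := by
    apply Real.sqrt_le_iff.2 ⟨ht0, ?_⟩
    have := Real.log_le_log (by positivity) (Real.cosh_le_exp_half_sq t)
    rw [Real.log_exp, ht] at this
    rw [one_div]
    linarith
  have hc : 0 < Real.cosh (q * t) := Real.cosh_pos _
  refine ⟨Polynomial.C (Real.cosh (q * t))⁻¹ *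
    (Polynomial.Chebyshev.T ℝ q).comp (Polynomial.C lam2⁻¹ * Polynomial.X), ?_, ?_, ?_⟩
  · refine (Polynomial.natDegree_C_mul_le _ _).trans ?_
    refine Polynomial.natDegree_comp_le.trans ?_
    have h2 : (Polynomial.Chebyshev.T ℝ q).natDegree = q := by simp
    rw [h2]
    have h3 : (Polynomial.C lam2⁻¹ * Polynomial.X : Polynomial ℝ).natDegree ≤ 1 :=
      (Polynomial.natDegree_C_mul_le _ _).trans Polynomial.natDegree_X_le
    nlinarith
  · have := Polynomial.Chebyshev.T_real_cosh t (q : ℤ)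
    simp only [Polynomial.eval_mul, Polynomial.eval_C, Polynomial.eval_comp,
      Polynomial.eval_X, mul_one]
    rw [← ht, this]
    push_cast
    exact inv_mul_cancel₀ hc.ne'
  · rintro x ⟨hx1, hx2⟩
    have hy1 : -1 ≤ lam2⁻¹ * x := by
      rw [inv_mul_eq_div, le_div_iff₀ hlam2_pos]; linarith
    have hy2 : lam2⁻¹ * x ≤ 1 := by
      rw [inv_mul_eq_div, div_le_iff₀ hlam2_pos]; linarith
    have hT := Polynomial.Chebyshev.T_real_cos (Real.arccos (lam2⁻¹ * x)) (q : ℤ)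
    rw [Real.cos_arccos hy1 hy2] at hT
    simp only [Polynomial.eval_mul, Polynomial.eval_C, Polynomial.eval_comp,
      Polynomial.eval_X]
    rw [hT, abs_mul, abs_of_pos (inv_pos.2 hc)]
    calc _ ≤ (Real.cosh (q * t))⁻¹ * 1 := by
          gcongr
          exact Real.abs_cos_le_one _
      _ ≤ (Real.exp (q * t) / 2)⁻¹ := by
          rw [mul_one]
          gcongr
          rw [Real.cosh_eq]
          have := Real.exp_pos (-(q * t))
          linarith
      _ = 2 * Real.exp (-(q : ℝ) * t) := by
          rw [inv_div, neg_mul, Real.exp_neg]; rfl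
      _ ≤ _ := by
          rw [neg_mul, neg_mul]
          gcongr
end

section
/- For every λ ∈ (0,1) and every natural number q, the degree-q Chebyshev polynomial of the first kind satisfies T_q(1/λ) ≥ (1/2)·exp(q·√(2·log(1/λ))). -/
/-- Chebyshev growth estimate used in Lemma 1 of the paper.
For every `λ ∈ (0,1)` and every natural number `q`, the degree-`q` Chebyshev
polynomial of the first kind satisfies `T_q (1/λ) ≥ (1/2) exp (q √(2 log (1/λ)))`. -/
theorem stmt_3 (lam : ℝ) (hlam_pos : 0 < lam) (hlam_lt : lam < 1) (q : ℕ) :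
    (1 / 2) * Real.exp ((q : ℝ) * Real.sqrt (2 * Real.log (1 / lam))) ≤
      (Polynomial.Chebyshev.T ℝ (q : ℤ)).eval (1 / lam) := by
  have hx : 1 ≤ 1 / lam := by
    rw [le_div_iff₀ hlam_pos]; linarith
  have hc := Real.cosh_arcosh hx
  have hn := Real.arcosh_nonneg hx
  set t := Real.arcosh (1 / lam) with ht
  have hsq : Real.sqrt (2 * Real.log (1 / lam)) ≤ t := by
    apply Real.sqrt_le_iff.mpr
    refine ⟨hn, ?_⟩
    have h1 := Real.cosh_le_exp_half_sq t
    rw [hc] at h1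
    have h2 := (Real.log_le_iff_le_exp (by linarith)).mpr h1
    linarith
  rw [← hc, Polynomial.Chebyshev.T_real_cosh, hc, Real.cosh_eq]
  have h3 : Real.exp ((q : ℝ) * Real.sqrt (2 * Real.log (1 / lam))) ≤ Real.exp ((q : ℝ) * t) :=
    Real.exp_le_exp.mpr (mul_le_mul_of_nonneg_left hsq (Nat.cast_nonneg q))
  have h4 := Real.exp_pos (-((q : ℝ) * t))
  push_cast
  linarith
end

section
/- Let λ > 0, L > 0, S > 0, and B ≥ 0. Let x_1, …, x_s ∈ ℝ^d with ‖x_k‖₂ ≤ L, let μ⋆ ∈ ℝ^d with ‖μ⋆‖₂ ≤ S, let η_1, …, η_s ∈ ℝ and e_1, …, e_s ∈ ℝ with Σ_{k=1}^s |e_k| ≤ 1, and set y_k = ⟨x_k, μ⋆⟩ + η_k + e_k. Define V = λI + Σ_{k=1}^s x_k x_kᵀ and μ̂ = V^{-1} Σ_{k=1}^s y_k x_k. If ‖Σ_{k=1}^s η_k x_k‖_{V^{-1}} ≤ B, then ‖μ̂ − μ⋆‖_V ≤ B + √λ·S + L/√λ. -/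
open Matrix

/-- The weighted norm `‖x‖_V = √(xᵀ V x)` associated with a matrix `V`. -/
noncomputable def wNorm {d : ℕ} (V : Matrix (Fin d) (Fin d) ℝ) (x : Fin d → ℝ) : ℝ :=
  Real.sqrt (x ⬝ᵥ V.mulVec x)

/-- The Euclidean norm `‖x‖₂ = √(xᵀ x)` on `ℝ^d`. -/
noncomputable def eucNorm {d : ℕ} (x : Fin d → ℝ) : ℝ :=
  Real.sqrt (x ⬝ᵥ x)

lemma aux_cs {d : ℕ} (V : Matrix (Fin d) (Fin d) ℝ)
    (hsymm : ∀ u w : Fin d → ℝ, w ⬝ᵥ V.mulVec u = u ⬝ᵥ V.mulVec w)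
    (hpos : ∀ u : Fin d → ℝ, 0 ≤ u ⬝ᵥ V.mulVec u) (w u : Fin d → ℝ) :
    |w ⬝ᵥ V.mulVec u| ≤ wNorm V w * wNorm V u := by
  have h : ∀ t : ℝ, 0 ≤ (u ⬝ᵥ V.mulVec u) * (t * t) + (2 * (w ⬝ᵥ V.mulVec u)) * t
      + w ⬝ᵥ V.mulVec w := by
    intro t
    have h1 := hpos (w + t • u)
    have h2 := hsymm u w
    simp only [Matrix.mulVec_add, Matrix.mulVec_smul, dotProduct_add, add_dotProduct,
      smul_dotProduct, dotProduct_smul, smul_eq_mul] at h1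
    rw [← h2] at h1
    linarith
  have hd := discrim_le_zero h
  unfold discrim at hd
  unfold wNorm
  rw [← Real.sqrt_mul (hpos w)]
  apply Real.abs_le_sqrt
  linarith

lemma aux_euc {d : ℕ} (w u : Fin d → ℝ) : |w ⬝ᵥ u| ≤ eucNorm w * eucNorm u := by
  have := aux_cs (1 : Matrix (Fin d) (Fin d) ℝ)
    (fun u w => by simp [dotProduct_comm])
    (fun u => by rw [Matrix.one_mulVec]; exact Finset.sum_nonneg fun i _ => mul_self_nonneg (u i)) w u
  simpa [wNorm, eucNorm] using this

/-- deterministic core of Theorem 1 of the paper. With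
`y_k = ⟨x_k, μ⋆⟩ + η_k + e_k`, `∑ |e_k| ≤ 1`, `‖x_k‖₂ ≤ L`, `‖μ⋆‖₂ ≤ S`,
`V = λ I + ∑ x_k x_kᵀ` and `μ̂ = V⁻¹ ∑ y_k x_k`, if the self-normalized noise term
satisfies `‖∑ η_k x_k‖_{V⁻¹} ≤ B`, then `‖μ̂ - μ⋆‖_V ≤ B + √λ S + L/√λ`. -/
theorem stmt_9 {d s : ℕ} (lam L S B : ℝ)
    (hlam : 0 < lam) (hL : 0 < L) (hS : 0 < S) (hB : 0 ≤ B)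
    (x : Fin s → Fin d → ℝ) (hx : ∀ k, eucNorm (x k) ≤ L)
    (mustar : Fin d → ℝ) (hmustar : eucNorm mustar ≤ S)
    (η : Fin s → ℝ) (e : Fin s → ℝ) (he : ∑ k, |e k| ≤ 1)
    (y : Fin s → ℝ) (hy : ∀ k, y k = x k ⬝ᵥ mustar + η k + e k)
    (V : Matrix (Fin d) (Fin d) ℝ)
    (hV : V = lam • (1 : Matrix (Fin d) (Fin d) ℝ) +
      ∑ k, Matrix.vecMulVec (x k) (x k))
    (muhat : Fin d → ℝ) (hmuhat : muhat = V⁻¹.mulVec (∑ k, y k • x k))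
    (hnoise : wNorm V⁻¹ (∑ k, η k • x k) ≤ B) :
    wNorm V (muhat - mustar) ≤ B + Real.sqrt lam * S + L / Real.sqrt lam := by
  have hself : ∀ u : Fin d → ℝ, 0 ≤ u ⬝ᵥ u := fun u =>
    Finset.sum_nonneg fun i _ => mul_self_nonneg (u i)
  have hVu : ∀ u : Fin d → ℝ, V.mulVec u = lam • u + ∑ k, (x k ⬝ᵥ u) • x k := by
    intro u
    rw [hV, Matrix.add_mulVec, Matrix.smul_mulVec, Matrix.one_mulVec, Matrix.sum_mulVec]
    congr 1
    refine Finset.sum_congr rfl fun k _ => ?_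
    rw [Matrix.vecMulVec_mulVec]
    ext i
    simp [mul_comm]
  have hform : ∀ w u : Fin d → ℝ,
      w ⬝ᵥ V.mulVec u = lam * (w ⬝ᵥ u) + ∑ k, (x k ⬝ᵥ u) * (w ⬝ᵥ x k) := by
    intro w u
    rw [hVu, dotProduct_add, dotProduct_smul, dotProduct_sum]
    simp [dotProduct_smul]
  have hsymm : ∀ u w : Fin d → ℝ, w ⬝ᵥ V.mulVec u = u ⬝ᵥ V.mulVec w := by
    intro u w
    rw [hform, hform, dotProduct_comm w u]
    congr 1
    refine Finset.sum_congr rfl fun k _ => ?_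
    rw [dotProduct_comm w, dotProduct_comm u, mul_comm]
  have hlow : ∀ u : Fin d → ℝ, lam * (u ⬝ᵥ u) ≤ u ⬝ᵥ V.mulVec u := by
    intro u
    rw [hform]
    have : 0 ≤ ∑ k, (x k ⬝ᵥ u) * (u ⬝ᵥ x k) := Finset.sum_nonneg fun k _ => by
      rw [dotProduct_comm u]; exact mul_self_nonneg _
    linarith
  have hpos : ∀ u : Fin d → ℝ, 0 ≤ u ⬝ᵥ V.mulVec u := fun u =>
    (mul_nonneg hlam.le (hself u)).trans (hlow u)
  have hunit : IsUnit V := by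
    rw [← Matrix.mulVec_injective_iff_isUnit]
    intro a b hab
    have h0 : V.mulVec (a - b) = 0 := by
      rw [Matrix.mulVec_sub]; exact sub_eq_zero.mpr hab
    have h1 := hlow (a - b)
    rw [h0, dotProduct_zero] at h1
    have h2 : (a - b) ⬝ᵥ (a - b) = 0 := by nlinarith [hself (a - b)]
    exact sub_eq_zero.mp (dotProduct_self_eq_zero.mp h2)
  have hdet : IsUnit V.det := (Matrix.isUnit_iff_isUnit_det V).mp hunit
  have hinv : ∀ a : Fin d → ℝ, V.mulVec (V⁻¹.mulVec a) = a := by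
    intro a
    rw [Matrix.mulVec_mulVec, Matrix.mul_nonsing_inv V hdet, Matrix.one_mulVec]
  set w := muhat - mustar with hw
  set a := ∑ k, η k • x k with ha
  have hVw : V.mulVec w = a + ∑ k, e k • x k - lam • mustar := by
    rw [hw, Matrix.mulVec_sub, hmuhat, hinv, hVu mustar, ha]
    simp only [hy, add_smul, Finset.sum_add_distrib]
    abel
  have hN0 : 0 ≤ wNorm V w := Real.sqrt_nonneg _
  have hE0 : 0 ≤ eucNorm w := Real.sqrt_nonneg _
  have hsl : 0 < Real.sqrt lam := Real.sqrt_pos.mpr hlam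
  have hsq : Real.sqrt lam * Real.sqrt lam = lam := Real.mul_self_sqrt hlam.le
  have hNE : Real.sqrt lam * eucNorm w ≤ wNorm V w := by
    unfold wNorm eucNorm
    rw [← Real.sqrt_mul hlam.le]
    exact Real.sqrt_le_sqrt (hlow w)
  have hNsq : wNorm V w * wNorm V w = w ⬝ᵥ V.mulVec w := Real.mul_self_sqrt (hpos w)
  have h1 : w ⬝ᵥ a ≤ wNorm V w * B := by
    have h := aux_cs V hsymm hpos w (V⁻¹.mulVec a)
    have h' : wNorm V (V⁻¹.mulVec a) = wNorm V⁻¹ a := by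
      unfold wNorm
      rw [hinv, dotProduct_comm]
    rw [hinv, h'] at h
    exact (le_abs_self _).trans (h.trans (mul_le_mul_of_nonneg_left hnoise hN0))
  have h2 : w ⬝ᵥ (∑ k, e k • x k) ≤ eucNorm w * L := by
    rw [dotProduct_sum]
    calc ∑ k, w ⬝ᵥ (e k • x k) ≤ ∑ k, |e k| * (eucNorm w * L) := by
          refine Finset.sum_le_sum fun k _ => ?_
          rw [dotProduct_smul, smul_eq_mul]
          refine (le_abs_self _).trans ?_
          rw [abs_mul]
          exact mul_le_mul_of_nonneg_left
            ((aux_euc w (x k)).trans (mul_le_mul_of_nonneg_left (hx k) hE0)) (abs_nonneg _)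
      _ = (∑ k, |e k|) * (eucNorm w * L) := by rw [Finset.sum_mul]
      _ ≤ 1 * (eucNorm w * L) := mul_le_mul_of_nonneg_right he (mul_nonneg hE0 hL.le)
      _ = _ := one_mul _
  have h3 : -(w ⬝ᵥ mustar) ≤ eucNorm w * S :=
    (neg_le_abs _).trans ((aux_euc w mustar).trans (mul_le_mul_of_nonneg_left hmustar hE0))
  have hEN : eucNorm w ≤ wNorm V w / Real.sqrt lam := by
    rw [le_div_iff₀ hsl]; linarith
  have h2' : w ⬝ᵥ (∑ k, e k • x k) ≤ wNorm V w * (L / Real.sqrt lam) := by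
    refine h2.trans ((mul_le_mul_of_nonneg_right hEN hL.le).trans (le_of_eq ?_))
    ring
  have h3' : -(lam * (w ⬝ᵥ mustar)) ≤ wNorm V w * (Real.sqrt lam * S) := by
    calc -(lam * (w ⬝ᵥ mustar)) = lam * -(w ⬝ᵥ mustar) := by ring
      _ ≤ lam * (eucNorm w * S) := mul_le_mul_of_nonneg_left h3 hlam.le
      _ = (Real.sqrt lam * Real.sqrt lam) * (eucNorm w * S) := by rw [hsq]
      _ = (Real.sqrt lam * eucNorm w) * (Real.sqrt lam * S) := by ring
      _ ≤ _ := mul_le_mul_of_nonneg_right hNE (by positivity)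
  have hmain : wNorm V w * wNorm V w
      ≤ wNorm V w * (B + Real.sqrt lam * S + L / Real.sqrt lam) := by
    rw [hNsq, hVw, dotProduct_sub, dotProduct_add, dotProduct_smul, smul_eq_mul]
    linarith
  rcases hN0.eq_or_lt with h | h
  · rw [← h]; positivity
  · exact le_of_mul_le_mul_left hmain h
end

section
/- Let V be a symmetric positive definite d×d real matrix, μ̂ ∈ ℝ^d, β ≥ 0, and define the ellipsoid E = {v ∈ ℝ^d : ‖v − μ̂‖_V ≤ β}. Let D ⊆ ℝ^d be a set of actions, let μ⋆ ∈ E, and suppose x̃ ∈ D and μ̃ ∈ E satisfy ⟨x, θ⟩ ≤ ⟨x̃, μ̃⟩ for all x ∈ D and θ ∈ E (i.e., (x̃, μ̃) is optimistic). Then for every x⋆ ∈ D, ⟨x⋆, μ⋆⟩ − ⟨x̃, μ⋆⟩ ≤ 2β·‖x̃‖_{V^{-1}}. -/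
open Matrix

/-- Cauchy–Schwarz for the dual pair of weighted norms. -/
theorem dot_le_wNorm {d : ℕ} (V : Matrix (Fin d) (Fin d) ℝ) (hV : V.PosDef)
    (x u : Fin d → ℝ) : x ⬝ᵥ u ≤ wNorm V⁻¹ x * wNorm V u := by
  have hdet : IsUnit V.det := (Matrix.isUnit_iff_isUnit_det V).1 hV.isUnit
  have hVy : V *ᵥ (V⁻¹ *ᵥ x) = x := by
    rw [Matrix.mulVec_mulVec, Matrix.mul_nonsing_inv V hdet, Matrix.one_mulVec]
  have hT : Vᵀ = V := by
    have h := hV.isHermitian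
    rwa [Matrix.IsHermitian, Matrix.conjTranspose_eq_transpose_of_trivial] at h
  have hsymm : (V⁻¹ *ᵥ x) ⬝ᵥ (V *ᵥ u) = x ⬝ᵥ u := by
    rw [Matrix.dotProduct_mulVec, ← Matrix.mulVec_transpose, hT, hVy]
  have hq : ∀ t : ℝ, 0 ≤ (x ⬝ᵥ (V⁻¹ *ᵥ x)) * (t * t) + (2 * (x ⬝ᵥ u)) * t + u ⬝ᵥ (V *ᵥ u) := by
    intro t
    have h := hV.posSemidef.dotProduct_mulVec_nonneg (t • (V⁻¹ *ᵥ x) + u)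
    simp only [star_trivial, Matrix.mulVec_add, Matrix.mulVec_smul, hVy, dotProduct_add,
      add_dotProduct, smul_dotProduct, dotProduct_smul, hsymm, smul_eq_mul] at h
    rw [dotProduct_comm (V⁻¹ *ᵥ x) x, dotProduct_comm u x] at h
    linarith
  have hd := discrim_le_zero hq
  have ha : 0 ≤ x ⬝ᵥ (V⁻¹ *ᵥ x) := by
    simpa using hV.inv.posSemidef.dotProduct_mulVec_nonneg x
  unfold discrim at hd
  unfold wNorm
  rw [← Real.sqrt_mul ha]
  apply Real.le_sqrt_of_sq_le
  linarith

/-- instantaneous regret of the optimistic (LinUCB) rule, first step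
of the exploration–exploitation term in Theorem 2 of the paper. If `μ⋆` lies in the
ellipsoid `E = {v : ‖v - μ̂‖_V ≤ β}` and `(x̃, μ̃) ∈ D × E` is optimistic, i.e.
`⟨x, θ⟩ ≤ ⟨x̃, μ̃⟩` for all `x ∈ D`, `θ ∈ E`, then for every `x⋆ ∈ D`,
`⟨x⋆, μ⋆⟩ - ⟨x̃, μ⋆⟩ ≤ 2 β ‖x̃‖_{V⁻¹}`. -/
theorem stmt_12 {d : ℕ} (V : Matrix (Fin d) (Fin d) ℝ) (hV : V.PosDef)
    (muhat : Fin d → ℝ) (β : ℝ) (hβ : 0 ≤ β)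
    (E : Set (Fin d → ℝ)) (hE : E = {v | wNorm V (v - muhat) ≤ β})
    (D : Set (Fin d → ℝ)) (mustar : Fin d → ℝ) (hmustar : mustar ∈ E)
    (xt : Fin d → ℝ) (hxt : xt ∈ D) (muTilde : Fin d → ℝ) (hmuTilde : muTilde ∈ E)
    (hopt : ∀ x ∈ D, ∀ θ ∈ E, x ⬝ᵥ θ ≤ xt ⬝ᵥ muTilde)
    (xstar : Fin d → ℝ) (hxstar : xstar ∈ D) :
    xstar ⬝ᵥ mustar - xt ⬝ᵥ mustar ≤ 2 * β * wNorm V⁻¹ xt := by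
  subst hE
  simp only [Set.mem_ofPred_eq] at hmustar hmuTilde
  have h0 := hopt xstar hxstar mustar hmustar
  have h1 := dot_le_wNorm V hV xt (muTilde - muhat)
  have h2 := dot_le_wNorm V hV (-xt) (mustar - muhat)
  have hneg : wNorm V⁻¹ (-xt) = wNorm V⁻¹ xt := by
    simp [wNorm, Matrix.mulVec_neg]
  have hn : 0 ≤ wNorm V⁻¹ xt := Real.sqrt_nonneg _
  rw [hneg, neg_dotProduct] at h2
  rw [dotProduct_sub] at h1 h2
  have h3 := mul_le_mul_of_nonneg_left hmuTilde hn
  have h4 := mul_le_mul_of_nonneg_left hmustar hn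
  linarith
end

section
/- Let λ ≥ L² > 0, and let x_1, …, x_n ∈ ℝ^d with ‖x_k‖₂ ≤ L for all k. Define V_0 = λI and V_k = V_{k-1} + x_k x_kᵀ for k = 1, …, n. Then Σ_{k=1}^n ‖x_k‖²_{V_{k-1}^{-1}} ≤ 2·log(det(V_n)/λ^d) ≤ 2d·log(1 + nL²/(dλ)). -/
open Matrix

theorem aux_width {d : ℕ} (A : Matrix (Fin d) (Fin d) ℝ) (lam : ℝ) (x : Fin d → ℝ)
    (hA : A.PosDef) (hlam : 0 < lam)
    (hq : ∀ y : Fin d → ℝ, lam * (y ⬝ᵥ y) ≤ y ⬝ᵥ A.mulVec y) (hx : x ⬝ᵥ x ≤ lam) :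
    0 ≤ x ⬝ᵥ A⁻¹.mulVec x ∧ x ⬝ᵥ A⁻¹.mulVec x ≤ 1 := by
  have hu : IsUnit A.det := hA.det_pos.ne'.isUnit
  obtain ⟨y, hy⟩ : ∃ y, y = A⁻¹.mulVec x := ⟨_, rfl⟩
  have hxy : A.mulVec y = x := by
    rw [hy, Matrix.mulVec_mulVec, Matrix.mul_nonsing_inv _ hu, Matrix.one_mulVec]
  rw [← hy]
  have h1 := hq y
  rw [hxy, dotProduct_comm y x] at h1
  have hyy : 0 ≤ y ⬝ᵥ y := by
    simp only [dotProduct]; exact Finset.sum_nonneg fun i _ => mul_self_nonneg _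
  have h0 : 0 ≤ x ⬝ᵥ y := le_trans (mul_nonneg hlam.le hyy) h1
  have hcs : (x ⬝ᵥ y) ^ 2 ≤ (x ⬝ᵥ x) * (y ⬝ᵥ y) := by
    have := Finset.sum_mul_sq_le_sq_mul_sq Finset.univ x y
    simpa [dotProduct, pow_two] using this
  refine ⟨h0, ?_⟩
  have : (x ⬝ᵥ x) * (y ⬝ᵥ y) ≤ lam * (y ⬝ᵥ y) := mul_le_mul_of_nonneg_right hx hyy
  by_contra! h
  nlinarith

theorem aux_log (w : ℝ) (h0 : 0 ≤ w) (h1 : w ≤ 1) : w ≤ 2 * Real.log (1 + w) := by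
  have h := Real.one_sub_inv_le_log_of_pos (show 0 < 1 + w by linarith)
  have : w / 2 ≤ 1 - (1 + w)⁻¹ := by
    have e : 1 - (1 + w)⁻¹ = w / (1 + w) := by field_simp; ring
    rw [e]
    exact div_le_div_of_nonneg_left h0 (by linarith) (by linarith)
  linarith

theorem aux_det {d : ℕ} (A : Matrix (Fin d) (Fin d) ℝ) (hA : A.PosDef) (c : ℝ) (hc : 0 < c)
    (ht : A.trace ≤ d * c) : Real.log A.det ≤ d * Real.log c := by
  have hH := hA.isHermitian
  have hp : ∀ i, 0 < hH.eigenvalues i := hA.eigenvalues_pos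
  rw [hH.det_eq_prod_eigenvalues]
  rw [hH.trace_eq_sum_eigenvalues] at ht
  simp only [RCLike.ofReal_real_eq_id, id_eq] at ht ⊢
  rw [Real.log_prod (fun i _ => (hp i).ne')]
  have : ∀ i ∈ Finset.univ, Real.log (hH.eigenvalues i) ≤
      Real.log c + (hH.eigenvalues i / c - 1) := by
    intro i _
    have := Real.log_le_sub_one_of_pos (div_pos (hp i) hc)
    rw [Real.log_div (hp i).ne' hc.ne'] at this
    linarith
  refine (Finset.sum_le_sum this).trans ?_
  rw [Finset.sum_add_distrib, Finset.sum_sub_distrib, ← Finset.sum_div]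
  simp only [Finset.sum_const, Finset.card_univ, Fintype.card_fin, nsmul_eq_mul, mul_one]
  have := (div_le_iff₀ hc).2 ht
  linarith

/-- elliptical potential lemma used in the regret analysis of
Theorem 2 of the paper. With `λ ≥ L² > 0`, `‖x_k‖₂ ≤ L`, `V_0 = λI` and
`V_k = V_{k-1} + x_k x_kᵀ`, one has
`∑_{k=1}^n ‖x_k‖²_{V_{k-1}⁻¹} ≤ 2 log (det V_n / λ^d) ≤ 2 d log (1 + n L²/(d λ))`. -/
theorem stmt_14 {d : ℕ} (lam L : ℝ) (hL : 0 < L) (hlam : L ^ 2 ≤ lam)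
    (n : ℕ) (x : ℕ → Fin d → ℝ) (hx : ∀ k, 1 ≤ k → k ≤ n → eucNorm (x k) ≤ L)
    (V : ℕ → Matrix (Fin d) (Fin d) ℝ)
    (hV0 : V 0 = lam • (1 : Matrix (Fin d) (Fin d) ℝ))
    (hVk : ∀ k, V (k + 1) = V k + Matrix.vecMulVec (x (k + 1)) (x (k + 1))) :
    (∑ k ∈ Finset.range n, x (k + 1) ⬝ᵥ (V k)⁻¹.mulVec (x (k + 1))) ≤
        2 * Real.log ((V n).det / lam ^ d) ∧
      2 * Real.log ((V n).det / lam ^ d) ≤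
        2 * d * Real.log (1 + n * L ^ 2 / (d * lam)) := by
  have hl : 0 < lam := lt_of_lt_of_le (by positivity) hlam
  have hxx : ∀ k, k < n → x (k + 1) ⬝ᵥ x (k + 1) ≤ L ^ 2 := by
    intro k hk
    have := hx (k + 1) (by omega) (by omega)
    exact (Real.sqrt_le_left hL.le).1 this
  have hps : ∀ a : Fin d → ℝ, (Matrix.vecMulVec a a).PosSemidef := by
    intro a
    simpa using Matrix.posSemidef_vecMulVec_self_star a
  have hpd : ∀ k, (V k).PosDef := by
    intro k
    induction k with
    | zero => rw [hV0]; exact Matrix.PosDef.one.smul hl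
    | succ k ih => rw [hVk]; exact ih.add_posSemidef (hps _)
  have hq : ∀ k, ∀ y : Fin d → ℝ, lam * (y ⬝ᵥ y) ≤ y ⬝ᵥ (V k).mulVec y := by
    intro k y
    induction k with
    | zero => rw [hV0, Matrix.smul_mulVec, Matrix.one_mulVec, dotProduct_smul, smul_eq_mul]
    | succ k ih =>
      rw [hVk, Matrix.add_mulVec, dotProduct_add]
      have := (hps (x (k + 1))).dotProduct_mulVec_nonneg y
      simp only [star_trivial] at this
      linarith
  have hdet : ∀ k, (V (k + 1)).det =
      (V k).det * (1 + x (k + 1) ⬝ᵥ (V k)⁻¹.mulVec (x (k + 1))) := by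
    intro k
    rw [hVk, Matrix.vecMulVec_eq Unit,
      Matrix.det_add_replicateCol_mul_replicateRow (hpd k).det_pos.ne'.isUnit]
    congr 1
    rw [Matrix.det_unique, Matrix.add_apply, Matrix.one_apply_eq, Matrix.mul_assoc,
      ← Matrix.replicateCol_mulVec, Matrix.replicateRow_mul_replicateCol_apply]
  have hw : ∀ k, k < n → 0 ≤ x (k + 1) ⬝ᵥ (V k)⁻¹.mulVec (x (k + 1)) ∧
      x (k + 1) ⬝ᵥ (V k)⁻¹.mulVec (x (k + 1)) ≤ 1 := fun k hk =>
    aux_width _ lam _ (hpd k) hl (hq k) ((hxx k hk).trans hlam)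
  have hlogdiv : Real.log ((V n).det / lam ^ d) = Real.log (V n).det - d * Real.log lam := by
    rw [Real.log_div (hpd n).det_pos.ne' (by positivity), Real.log_pow]
  have hsum : ∀ m, m ≤ n → (∑ k ∈ Finset.range m, x (k + 1) ⬝ᵥ (V k)⁻¹.mulVec (x (k + 1))) ≤
      2 * (Real.log (V m).det - d * Real.log lam) := by
    intro m hm
    induction m with
    | zero => simp [hV0]
    | succ m ih =>
      obtain ⟨h0, h1⟩ := hw m (by omega)
      have := aux_log _ h0 h1
      rw [Finset.sum_range_succ, hdet, Real.log_mul (hpd m).det_pos.ne' (by linarith)]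
      linarith [ih (by omega)]
  have htr : ∀ m, m ≤ n → (V m).trace ≤ d * lam + m * L ^ 2 := by
    intro m hm
    induction m with
    | zero => simp [hV0, Matrix.trace_smul, mul_comm]
    | succ m ih =>
      rw [hVk, Matrix.trace_add, Matrix.trace_vecMulVec]
      push_cast
      linarith [ih (by omega), hxx m (by omega)]
  rw [hlogdiv]
  refine ⟨hsum n le_rfl, ?_⟩
  rcases Nat.eq_zero_or_pos d with rfl | hd
  · simp
  have hd' : (0 : ℝ) < d := by exact_mod_cast hd
  have hpos : 0 < 1 + n * L ^ 2 / (d * lam) := by positivity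
  have := aux_det (V n) (hpd n) (lam * (1 + n * L ^ 2 / (d * lam))) (by positivity) (by
    refine (htr n le_rfl).trans (le_of_eq ?_)
    field_simp)
  rw [Real.log_mul hl.ne' hpos.ne'] at this
  linarith
end
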